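/- arXiv:2104.02325 — 2 statements merged into one kernel-verified Lean document; each statement's English description precedes it below -/
import Mathlib

section
/- For all finite trees Ψ and T there exists a bicyclic graph Δ such that Aut(Δ) ≅ Aut(Ψ) × (Aut(T) ≀ (Z₂ × Z₂)), where Aut(T) ≀ (Z₂ × Z₂) = Aut(T)⁴ ⋊ (Z₂ × Z₂) with Z₂ × Z₂ permuting the four coordinates (indexed by its own elements) by translation. -/
open SimpleGraph

/-- The automorphism of `ι → G` given by permuting coordinates by `σ`. -/
def permAut {ι G : Type} [Group G] (σ : Equiv.Perm ι) : MulAut (ι → G) where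
  toFun f := f ∘ σ.symm
  invFun f := f ∘ σ
  left_inv f := by funext i; simp
  right_inv f := by funext i; simp
  map_mul' f g := rfl

/-- The action of `Equiv.Perm ι` on `ι → G` by permuting coordinates, as a homomorphism. -/
def permHom (ι G : Type) [Group G] : Equiv.Perm ι →* MulAut (ι → G) where
  toFun := permAut
  map_one' := by ext f i; rfl
  map_mul' σ τ := by ext f i; rfl

/-- Combine two actions-by-automorphisms into one on the direct product. -/
def autProdHom {Q M N : Type} [Group Q] [Group M] [Group N]
    (φ : Q →* MulAut M) (ψ : Q →* MulAut N) : Q →* MulAut (M × N) where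
  toFun q := (φ q).prodCongr (ψ q)
  map_one' := by
    show MulEquiv.prodCongr (φ 1) (ψ 1) = 1
    rw [map_one, map_one]; ext x <;> rfl
  map_mul' a b := by
    show MulEquiv.prodCongr (φ (a * b)) (ψ (a * b)) = _
    rw [map_mul, map_mul]; ext x <;> rfl

/-- The translation action of an additive group on itself, as permutations. -/
def transPermHom (A : Type) [AddGroup A] : Multiplicative A →* Equiv.Perm A :=
  MulAction.toPermHom (Multiplicative A) A

/-- The action of (the multiplicative version of) an additive group `A` on `A → G`
by translating the coordinates. -/
def transAutHom (A G : Type) [AddGroup A] [Group G] : Multiplicative A →* MulAut (A → G) :=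
  (permHom A G).comp (transPermHom A)

/-- The Klein four-group `Z₂ × Z₂` (written multiplicatively). -/
abbrev K4 : Type := Multiplicative (ZMod 2 × ZMod 2)

/-- Projection of the Klein four-group onto its first `Z₂` factor. -/
def fstK : K4 →* Multiplicative (ZMod 2) :=
  AddMonoidHom.toMultiplicative (AddMonoidHom.fst (ZMod 2) (ZMod 2))

/-- Projection of the Klein four-group onto its second `Z₂` factor. -/
def sndK : K4 →* Multiplicative (ZMod 2) :=
  AddMonoidHom.toMultiplicative (AddMonoidHom.snd (ZMod 2) (ZMod 2))

/-- The wreath product `D ≀ (Z₂ × Z₂) = D⁴ ⋊ (Z₂ × Z₂)`: the four coordinates are indexed by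
the elements of `Z₂ × Z₂`, which acts by translating the indices. -/
def wreathK4 (D : Type) [Group D] : Type :=
  (ZMod 2 × ZMod 2 → D) ⋊[transAutHom (ZMod 2 × ZMod 2) D] K4

instance (D : Type) [Group D] : Group (wreathK4 D) :=
  inferInstanceAs (Group (_ ⋊[transAutHom (ZMod 2 × ZMod 2) D] K4))

/-- A graph is bicyclic if it is connected and its number of edges exceeds its number of
vertices by exactly one (i.e. it has cyclomatic number 2). -/
def SimpleGraph.IsBicyclic {V : Type} (G : SimpleGraph V) : Prop :=
  G.Connected ∧ G.edgeSet.ncard = Nat.card V + 1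


/-- Rooted tree realizing the group `D` as its group of root-preserving automorphisms. -/
structure RT (D : Type) [Group D] : Type 1 where
  R : Type
  fin : Finite R
  G : SimpleGraph R
  r : R
  d : R → ℕ
  low : ∀ x, x ≠ r → ∃ y, G.Adj x y ∧ d y < d x
  uniq : ∀ x y z, G.Adj x y → G.Adj x z → d y ≤ d x → d z ≤ d x → y = z
  root : ∀ y, G.Adj r y → d r < d y
  ρ : D →* (G ≃g G)
  inj : Function.Injective ρ
  fix : ∀ a, ρ a r = r
  surj : ∀ f : G ≃g G, f r = r → ∃ a, ρ a = f

section trees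
variable {V : Type} {T : SimpleGraph V}

theorem tree_away (hT : T.IsTree) {x y z : V} (hy : T.Adj x y) (hz : T.Adj x z) (u : V)
    (h1 : T.dist y u ≤ T.dist x u) (h2 : T.dist z u ≤ T.dist x u) : y = z := by
  classical
  have key : ∀ w, T.Adj x w → T.dist w u ≤ T.dist x u →
      ∃ p : T.Walk w u, p.IsPath ∧ x ∉ p.support := by
    intro w hw hle
    obtain ⟨p, hp, hl⟩ := hT.connected.exists_path_of_dist w u
    refine ⟨p, hp, fun hx => ?_⟩
    have e := congrArg Walk.length (p.take_spec hx)
    rw [Walk.length_append] at e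
    have h3 := dist_le (p.dropUntil x hx)
    have h4 : (p.takeUntil x hx).length ≠ 0 := fun h0 =>
      hw.ne (Walk.eq_of_length_eq_zero h0).symm
    omega
  obtain ⟨p, hp, hxp⟩ := key y hy h1
  obtain ⟨q, hq, hxq⟩ := key z hz h2
  have := (hT.isAcyclic.subsingleton_path _ _).elim ⟨Walk.cons hy p, hp.cons hxp⟩ ⟨Walk.cons hz q, hq.cons hxq⟩
  have := congrArg (fun w : T.Path x u => w.1.snd) this
  simpa using this

variable [Fintype V]

noncomputable def tf (T : SimpleGraph V) (x : V) : ℕ := ∑ u, T.dist x u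

theorem tf_convex (hT : T.IsTree) {x y z : V} (hy : T.Adj x y) (hz : T.Adj x z) (hne : y ≠ z) :
    2 * tf T x < tf T y + tf T z := by
  unfold tf
  rw [← Finset.sum_add_distrib, Finset.mul_sum]
  apply Finset.sum_lt_sum
  · intro u _
    have t1 := hT.connected.dist_triangle (u := x) (v := y) (w := u)
    have t2 := hT.connected.dist_triangle (u := x) (v := z) (w := u)
    rw [dist_eq_one_iff_adj.2 hy] at t1
    rw [dist_eq_one_iff_adj.2 hz] at t2
    by_contra hc
    exact hne (tree_away hT hy hz u (by omega) (by omega))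
  · refine ⟨x, Finset.mem_univ _, ?_⟩
    rw [dist_comm (u := y), dist_comm (u := z), dist_eq_one_iff_adj.2 hy, dist_eq_one_iff_adj.2 hz]
    simp

theorem tf_path (hT : T.IsTree) {x y : V} (p : T.Walk x y) (hp : p.IsPath) :
    ∀ z, T.Adj x z → z ∉ p.support → tf T z ≤ tf T x →
      tf T x ≤ tf T y ∧ (x ≠ y → tf T x < tf T y) := by
  induction p with
  | nil => intro z _ _ _; simp
  | @cons a b c h p ih =>
    intro z hz hzs hle
    rw [Walk.cons_isPath_iff] at hp
    have hzb : z ≠ b := by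
      rintro rfl; exact hzs (by simp)
    have := tf_convex hT hz h hzb
    have := (ih hp.1 a h.symm hp.2 (by omega)).1
    omega

def tM (T : SimpleGraph V) : Set V := {x | ∀ y, tf T x ≤ tf T y}

theorem tM_nonempty (hT : T.IsTree) : ∃ m, m ∈ tM T := by
  have := hT.connected.nonempty
  obtain ⟨m, hm⟩ := Finite.exists_min (tf T)
  exact ⟨m, hm⟩

theorem tM_adj (hT : T.IsTree) {x y : V} (hx : x ∈ tM T) (hy : y ∈ tM T) (hne : x ≠ y) :
    T.Adj x y := by
  obtain ⟨p, hp, -⟩ := hT.connected.exists_path_of_dist x y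
  cases p with
  | nil => exact absurd rfl hne
  | @cons _ b _ h p =>
    rw [Walk.cons_isPath_iff] at hp
    by_cases hb : b = y
    · exact hb ▸ h
    · have := (tf_path hT p hp.1 x h.symm hp.2 (hx _)).2 hb
      have := hy b
      omega

theorem tM_low (hT : T.IsTree) {x : V} (hx : x ∉ tM T) : ∃ y, T.Adj x y ∧ tf T y < tf T x := by
  obtain ⟨m, hm⟩ := tM_nonempty hT
  have hlt : tf T m < tf T x := by
    by_contra hc
    exact hx fun y => (not_lt.1 hc).trans (hm y)
  obtain ⟨p, hp, -⟩ := hT.connected.exists_path_of_dist x m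
  cases p with
  | nil => exact absurd hm hx
  | @cons _ b _ h p =>
    rw [Walk.cons_isPath_iff] at hp
    refine ⟨b, h, ?_⟩
    by_contra hc
    have := (tf_path hT p hp.1 x h.symm hp.2 (not_lt.1 hc)).1
    omega

theorem iso_dist_le (f : T ≃g T) (x u : V) (h : T.Reachable x u) :
    T.dist (f x) (f u) ≤ T.dist x u := by
  obtain ⟨p, hp⟩ := h.exists_walk_length_eq_dist
  rw [← hp, ← Walk.length_map f.toHom p]
  exact dist_le _

theorem iso_dist (f : T ≃g T) (x u : V) : T.dist (f x) (f u) = T.dist x u := by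
  by_cases h : T.Reachable x u
  · have h' : T.Reachable (f x) (f u) := f.reachable_iff.2 h
    apply le_antisymm (iso_dist_le f x u h)
    simpa using iso_dist_le f.symm (f x) (f u) h'
  · have h' : ¬ T.Reachable (f x) (f u) := fun h' => h (f.reachable_iff.1 h')
    rw [dist_eq_zero_of_not_reachable h, dist_eq_zero_of_not_reachable h']

theorem tf_iso (f : T ≃g T) (x : V) : tf T (f x) = tf T x := by
  unfold tf
  rw [← f.toEquiv.sum_comp]
  refine Finset.sum_congr rfl fun u _ => ?_
  exact iso_dist f x u

theorem tM_iso (f : T ≃g T) (x : V) : f x ∈ tM T ↔ x ∈ tM T := by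
  constructor
  · intro h y
    rw [← tf_iso f x, ← tf_iso f y]; exact h _
  · intro h y
    rw [tf_iso f x]; exact h _

/-- Tree with a new root attached at the center. -/
def tG (T : SimpleGraph V) : SimpleGraph (Option V) where
  Adj a b := match a, b with
    | none, none => False
    | none, some y => y ∈ tM T
    | some x, none => x ∈ tM T
    | some x, some y => T.Adj x y ∧ ¬ (x ∈ tM T ∧ y ∈ tM T)
  symm := ⟨by
    rintro (_ | x) (_ | y) h
    · exact h
    · exact h
    · exact h
    · exact ⟨h.1.symm, fun h' => h.2 h'.symm⟩⟩
  loopless := ⟨by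
    rintro (_ | x) h
    · exact h
    · exact h.1.ne rfl⟩

def tρ (f : T ≃g T) : tG T ≃g tG T where
  toEquiv := Equiv.optionCongr f.toEquiv
  map_rel_iff' := by
    rintro (_ | x) (_ | y)
    · rfl
    · exact tM_iso f y
    · exact tM_iso f x
    · exact and_congr f.map_adj_iff (not_congr (and_congr (tM_iso f x) (tM_iso f y)))

theorem tG_adj (hT : T.IsTree) (x y : V) : T.Adj x y ↔
    ((tG T).Adj (some x) (some y) ∨ (x ≠ y ∧ (tG T).Adj none (some x) ∧ (tG T).Adj none (some y))) := by
  constructor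
  · intro h
    by_cases hm : x ∈ tM T ∧ y ∈ tM T
    · exact Or.inr ⟨h.ne, hm.1, hm.2⟩
    · exact Or.inl ⟨h, hm⟩
  · rintro (h | ⟨h1, h2, h3⟩)
    · exact h.1
    · exact tM_adj hT h2 h3 h1

noncomputable def treeRT (hT : T.IsTree) : RT (T ≃g T) where
  R := Option V
  fin := inferInstance
  G := tG T
  r := none
  d := fun a => a.elim 0 (fun x => tf T x + 1)
  low := by
    rintro (_ | x) hx
    · exact absurd rfl hx
    · by_cases hm : x ∈ tM T
      · exact ⟨none, hm, by simp⟩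
      · obtain ⟨y, h1, h2⟩ := tM_low hT hm
        exact ⟨some y, ⟨h1, fun h => hm h.1⟩, by simpa using h2⟩
  uniq := by
    rintro (_ | x) (_ | y) (_ | z) h1 h2 h3 h4
    · rfl
    · exact h1.elim
    · exact h2.elim
    · simp at h3
    · rfl
    · exact absurd ⟨h1, fun w => (by simpa using h4 : tf T z ≤ tf T x).trans (h1 w)⟩ h2.2
    · exact absurd ⟨h2, fun w => (by simpa using h3 : tf T y ≤ tf T x).trans (h2 w)⟩ h1.2
    · by_contra hne
      have := tf_convex hT h1.1 h2.1 (fun h => hne (by rw [h]))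
      simp at h3 h4
      omega
  root := by
    rintro (_ | y) h
    · exact h.elim
    · simp
  ρ := { toFun := tρ
         map_one' := by ext (_ | x) <;> rfl
         map_mul' := fun f g => by
          ext1 a
          rcases a with _ | x <;> rfl }
  inj := by
    intro f g h
    ext1 x
    have := DFunLike.congr_fun h (some x)
    exact Option.some_injective _ this
  fix := fun a => rfl
  surj := by
    intro f hf
    have hs : ∀ x : V, ∃ y, f (some x) = some y := by
      intro x
      rcases h : f (some x) with _ | y
      · rw [← hf] at h
        exact absurd (f.injective h) (by simp)
      · exact ⟨y, rfl⟩
    choose g hg using hs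
    have ginj : Function.Injective g := by
      intro x y h
      have := (hg x).trans ((congrArg some h).trans (hg y).symm)
      exact Option.some_injective _ (f.injective this)
    have gbij : Function.Bijective g := Finite.injective_iff_bijective.1 ginj
    have hn : ∀ x, (tG T).Adj none (some (g x)) ↔ (tG T).Adj none (some x) := by
      intro x
      have := f.map_adj_iff (v := none) (w := some x)
      rwa [hf, hg] at this
    refine ⟨⟨Equiv.ofBijective g gbij, ?_⟩, ?_⟩
    · intro x y
      show T.Adj (g x) (g y) ↔ T.Adj x y
      rw [tG_adj hT, tG_adj hT, hn, hn, ginj.ne_iff, ← hg, ← hg, f.map_adj_iff]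
    · ext1 a
      rcases a with _ | x
      · exact hf.symm
      · exact (hg x).symm

end trees

section theta

abbrev KK : Type := ZMod 2 × ZMod 2

abbrev C7 : Type := ZMod 2 ⊕ (Unit ⊕ KK)

def thB : C7 → C7 → Bool
  | .inl _, .inl _ => false
  | .inl _, .inr (.inl _) => true
  | .inl i, .inr (.inr k) => decide (k.1 = i)
  | .inr (.inl _), .inl _ => true
  | .inr (.inl _), .inr (.inl _) => false
  | .inr (.inl _), .inr (.inr _) => false
  | .inr (.inr k), .inl i => decide (k.1 = i)
  | .inr (.inr _), .inr (.inl _) => false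
  | .inr (.inr k), .inr (.inr k') => decide (k.1 ≠ k'.1 ∧ k.2 = k'.2)

def th : SimpleGraph C7 where
  Adj a b := thB a b = true
  symm := ⟨by decide⟩
  loopless := ⟨by decide⟩

instance : DecidableRel th.Adj := fun a b => inferInstanceAs (Decidable (thB a b = true))

theorem th_edges : th.edgeSet.ncard = 8 := by
  rw [Set.ncard_eq_toFinset_card']
  decide

theorem th_two : ∀ a : C7, ∃ b c, b ≠ c ∧ th.Adj a b ∧ th.Adj a c := by decide

set_option synthInstance.maxHeartbeats 400000 in
set_option synthInstance.maxSize 1000 in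
theorem th_hub : ∀ a b c d : C7, th.Adj a b → th.Adj a c → th.Adj a d → b ≠ c → b ≠ d → c ≠ d →
    ∃ i, a = .inl i := by decide +kernel

theorem th_mid : ∀ (a : C7) (i j : ZMod 2), i ≠ j → th.Adj (.inl i) a → th.Adj (.inl j) a →
    a = .inr (.inl ()) := by decide

theorem th_nb : ∀ (a : C7) (i : ZMod 2), th.Adj (.inl i) a → a ≠ .inr (.inl ()) →
    ∃ l, a = .inr (.inr (i, l)) := by decide

theorem th_opp : ∀ (i j l m : ZMod 2), th.Adj (.inr (.inr (i, l))) (.inr (.inr (j, m))) →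
    l = m := by decide

theorem zadd : ∀ h : ZMod 2 → ZMod 2, h 0 ≠ h 1 → ∀ i, h i = h 0 + i := by decide

theorem zcases : ∀ i : ZMod 2, i = 0 ∨ i = 1 := by decide

theorem theta_aut (f : C7 → C7) (hi : Function.Injective f)
    (ha : ∀ a b, th.Adj a b → th.Adj (f a) (f b)) :
    ∃ t : KK, (∀ i, f (.inl i) = .inl (t.1 + i)) ∧ f (.inr (.inl ())) = .inr (.inl ()) ∧
      ∀ k, f (.inr (.inr k)) = .inr (.inr (t + k)) := by
  have hh : ∀ i, ∃ j, f (.inl i) = .inl j := by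
    intro i
    refine th_hub _ (f (.inr (.inl ()))) (f (.inr (.inr (i, 0)))) (f (.inr (.inr (i, 1))))
      (ha _ _ ?_) (ha _ _ ?_) (ha _ _ ?_) (hi.ne ?_) (hi.ne ?_) (hi.ne ?_) <;>
    revert i <;> decide
  choose h hh using hh
  have h01 : h 0 ≠ h 1 := by
    intro e
    have := hi ((hh 0).trans ((congrArg Sum.inl e).trans (hh 1).symm))
    revert this; decide
  have hm : f (.inr (.inl ())) = .inr (.inl ()) := by
    apply th_mid _ (h 0) (h 1) h01
    · rw [← hh]; exact ha _ _ (by decide)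
    · rw [← hh]; exact ha _ _ (by decide)
  have hb : ∀ k : KK, ∃ l, f (.inr (.inr k)) = .inr (.inr (h k.1, l)) := by
    intro k
    apply th_nb
    · rw [← hh]; exact ha _ _ (by revert k; decide)
    · rw [← hm]; exact hi.ne (by simp)
  choose l hl using hb
  have hopp : ∀ j, l (0, j) = l (1, j) := by
    intro j
    apply th_opp (h 0) (h 1)
    have := ha (.inr (.inr (0, j))) (.inr (.inr (1, j))) (by revert j; decide)
    rwa [hl, hl] at this
  have hne : l (0, 0) ≠ l (0, 1) := by
    intro e
    have := hi (a₁ := .inr (.inr (0, 0))) (a₂ := .inr (.inr (0, 1))) (by rw [hl, hl, e])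
    revert this; decide
  have z1 := zadd h h01
  have z2 := zadd (fun j => l (0, j)) hne
  refine ⟨(h 0, l (0, 0)), fun i => by rw [hh, z1], hm, ?_⟩
  rintro ⟨i, j⟩
  rw [hl]
  have : l (i, j) = l (0, j) := by
    rcases zcases i with rfl | rfl
    · rfl
    · exact (hopp j).symm
  rw [this]
  simp only [Prod.mk_add_mk]
  rw [← z1, ← z2]

end theta

inductive Wt (P Q : Type)
  | hub (i : ZMod 2) : Wt P Q
  | ps (u : P) : Wt P Q
  | br (k : KK) (v : Q) : Wt P Q

theorem Wt_finite (P Q : Type) [Finite P] [Finite Q] : Finite (Wt P Q) := by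
  apply Finite.of_surjective
    (fun x : ZMod 2 ⊕ (P ⊕ (KK × Q)) =>
      (match x with
        | .inl i => Wt.hub i
        | .inr (.inl u) => Wt.ps u
        | .inr (.inr p) => Wt.br p.1 p.2 : Wt P Q))
  rintro (i | u | ⟨k, v⟩)
  · exact ⟨.inl i, rfl⟩
  · exact ⟨.inr (.inl u), rfl⟩
  · exact ⟨.inr (.inr (k, v)), rfl⟩

section delta
variable {D E : Type} [Group D] [Group E] (A : RT D) (B : RT E)

def dAdj : Wt A.R B.R → Wt A.R B.R → Prop
  | .hub _, .hub _ => False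
  | .hub _, .ps u => u = A.r
  | .hub i, .br k v => k.1 = i ∧ v = B.r
  | .ps u, .hub _ => u = A.r
  | .ps u, .ps u' => A.G.Adj u u'
  | .ps _, .br _ _ => False
  | .br k v, .hub i => k.1 = i ∧ v = B.r
  | .br _ _, .ps _ => False
  | .br k v, .br k' v' => (k = k' ∧ B.G.Adj v v') ∨
      (v = B.r ∧ v' = B.r ∧ k.1 ≠ k'.1 ∧ k.2 = k'.2)

def dG : SimpleGraph (Wt A.R B.R) where
  Adj := dAdj A B
  symm := ⟨by
    rintro (i | u | ⟨k, v⟩) (j | u' | ⟨k', v'⟩) h <;> try exact h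
    · exact SimpleGraph.Adj.symm (G := A.G) h
    · rcases h with ⟨rfl, h⟩ | ⟨h1, h2, h3, h4⟩
      · exact Or.inl ⟨rfl, h.symm⟩
      · exact Or.inr ⟨h2, h1, h3.symm, h4.symm⟩⟩
  loopless := ⟨by
    rintro (i | u | ⟨k, v⟩) h
    · exact h
    · exact A.G.irrefl h
    · rcases h with ⟨_, h⟩ | ⟨_, _, h, _⟩
      · exact B.G.irrefl h
      · exact h rfl⟩

def cemb : C7 → Wt A.R B.R
  | .inl i => .hub i
  | .inr (.inl _) => .ps A.r
  | .inr (.inr k) => .br k B.r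

theorem cemb_inj : Function.Injective (cemb A B) := by
  rintro (i | u | k) (j | u' | k') h <;> simp_all [cemb]

theorem cemb_adj (a b : C7) : (dG A B).Adj (cemb A B a) (cemb A B b) ↔ th.Adj a b := by
  rcases a with (i | u | k) <;> rcases b with (j | u' | k') <;>
    simp [cemb, dG, dAdj, th, thB]

def core : Set (Wt A.R B.R) := Set.range (cemb A B)

theorem hub_core (i : ZMod 2) : .hub i ∈ core A B := ⟨.inl i, rfl⟩

theorem ps_core (u : A.R) : .ps u ∈ core A B ↔ u = A.r := by
  constructor
  · rintro ⟨(i | u | k), h⟩ <;> simp_all [cemb]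
  · rintro rfl; exact ⟨.inr (.inl ()), rfl⟩

theorem br_core (k : KK) (v : B.R) : .br k v ∈ core A B ↔ v = B.r := by
  constructor
  · rintro ⟨(i | u | k), h⟩ <;> simp_all [cemb]
  · rintro rfl; exact ⟨.inr (.inr k), rfl⟩

def dd : Wt A.R B.R → ℕ
  | .hub _ => 0
  | .ps u => A.d u
  | .br _ v => B.d v

theorem d_low (x : Wt A.R B.R) (hx : x ∉ core A B) :
    ∃ y, (dG A B).Adj x y ∧ dd A B y < dd A B x := by
  rcases x with (i | u | ⟨k, v⟩)
  · exact absurd (hub_core A B i) hx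
  · rw [ps_core] at hx
    obtain ⟨y, h1, h2⟩ := A.low u hx
    exact ⟨.ps y, h1, h2⟩
  · rw [br_core] at hx
    obtain ⟨y, h1, h2⟩ := B.low v hx
    exact ⟨.br k y, Or.inl ⟨rfl, h1⟩, h2⟩

theorem nb_ps (u : A.R) (hu : u ≠ A.r) (y : Wt A.R B.R) (h : (dG A B).Adj (.ps u) y) :
    ∃ u', y = .ps u' ∧ A.G.Adj u u' := by
  rcases y with (i | u' | ⟨k, v⟩)
  · exact absurd h hu
  · exact ⟨u', rfl, h⟩
  · exact h.elim

theorem nb_br (k : KK) (v : B.R) (hv : v ≠ B.r) (y : Wt A.R B.R)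
    (h : (dG A B).Adj (.br k v) y) : ∃ v', y = .br k v' ∧ B.G.Adj v v' := by
  rcases y with (i | u' | ⟨k', v'⟩)
  · exact absurd h.2 hv
  · exact h.elim
  · rcases h with ⟨rfl, h⟩ | ⟨h, _⟩
    · exact ⟨v', rfl, h⟩
    · exact absurd h hv

theorem d_uniq (x y z : Wt A.R B.R) (hx : x ∉ core A B) (hy : (dG A B).Adj x y)
    (hz : (dG A B).Adj x z) (h1 : dd A B y ≤ dd A B x) (h2 : dd A B z ≤ dd A B x) : y = z := by
  rcases x with (i | u | ⟨k, v⟩)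
  · exact absurd (hub_core A B i) hx
  · rw [ps_core] at hx
    obtain ⟨y, rfl, hy1⟩ := nb_ps A B u hx y hy
    obtain ⟨z, rfl, hz1⟩ := nb_ps A B u hx z hz
    rw [A.uniq u y z hy1 hz1 h1 h2]
  · rw [br_core] at hx
    obtain ⟨y, rfl, hy1⟩ := nb_br A B k v hx y hy
    obtain ⟨z, rfl, hz1⟩ := nb_br A B k v hx z hz
    rw [B.uniq v y z hy1 hz1 h1 h2]

theorem d_root (x y : Wt A.R B.R) (hx : x ∉ core A B) (hy : (dG A B).Adj x y)
    (hc : y ∈ core A B) : dd A B y < dd A B x := by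
  rcases x with (i | u | ⟨k, v⟩)
  · exact absurd (hub_core A B i) hx
  · rw [ps_core] at hx
    obtain ⟨y, rfl, hy1⟩ := nb_ps A B u hx y hy
    rw [ps_core] at hc; subst hc
    exact A.root _ hy1.symm
  · rw [br_core] at hx
    obtain ⟨y, rfl, hy1⟩ := nb_br A B k v hx y hy
    rw [br_core] at hc; subst hc
    exact B.root _ hy1.symm

theorem d_up (x y z : Wt A.R B.R) (hx : x ∉ core A B) (hy : (dG A B).Adj x y)
    (hz : (dG A B).Adj x z) (hne : y ≠ z) :
    (y ∉ core A B ∧ dd A B x < dd A B y) ∨ (z ∉ core A B ∧ dd A B x < dd A B z) := by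
  have ry := d_root A B x y hx hy
  have rz := d_root A B x z hx hz
  have u := d_uniq A B x y z hx hy hz
  by_cases h1 : dd A B y ≤ dd A B x
  · by_cases h2 : dd A B z ≤ dd A B x
    · exact absurd (u h1 h2) hne
    · right
      exact ⟨fun h => h2 (rz h).le, not_le.1 h2⟩
  · left
    exact ⟨fun h => h1 (ry h).le, not_le.1 h1⟩

theorem d_class (x y : Wt A.R B.R) (h : (dG A B).Adj x y) :
    (x ∈ core A B ∧ y ∈ core A B) ∨ (x ∉ core A B ∧ dd A B y < dd A B x) ∨
      (y ∉ core A B ∧ dd A B x < dd A B y) := by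
  by_cases hx : x ∈ core A B
  · by_cases hy : y ∈ core A B
    · exact Or.inl ⟨hx, hy⟩
    · exact Or.inr (Or.inr ⟨hy, d_root A B y x hy h.symm hx⟩)
  · by_cases hlt : dd A B y < dd A B x
    · exact Or.inr (Or.inl ⟨hx, hlt⟩)
    · obtain ⟨z, hz, hzl⟩ := d_low A B x hx
      rcases d_up A B x y z hx h hz (by rintro rfl; exact hlt hzl) with h' | h'
      · exact Or.inr (Or.inr h')
      · omega

theorem dG_connected : (dG A B).Connected := by
  have hub : ∀ i, (dG A B).Adj (.hub i) (.ps A.r) := fun i => rfl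
  have hcore : ∀ a, (dG A B).Reachable (cemb A B a) (.ps A.r) := by
    rintro (i | u | k)
    · exact (hub i).reachable
    · exact Reachable.refl _
    · have : (dG A B).Adj (.br k B.r) (.hub k.1) := ⟨rfl, rfl⟩
      exact this.reachable.trans (hub _).reachable
  have hall : ∀ n x, dd A B x = n → (dG A B).Reachable x (.ps A.r) := by
    intro n
    induction n using Nat.strong_induction_on with
    | _ n ih =>
      intro x hx
      by_cases hc : x ∈ core A B
      · obtain ⟨a, rfl⟩ := hc
        exact hcore a
      · obtain ⟨y, h1, h2⟩ := d_low A B x hc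
        exact h1.reachable.trans (ih _ (hx ▸ h2) y rfl)
  have : Nonempty (Wt A.R B.R) := ⟨.hub 0⟩
  exact ⟨fun x y => (hall _ x rfl).trans (hall _ y rfl).symm⟩

theorem dG_edges : (dG A B).edgeSet.ncard = Nat.card (Wt A.R B.R) + 1 := by
  have := A.fin
  have := B.fin
  have := Wt_finite A.R B.R
  have hp : ∀ x : Wt A.R B.R, ∃ y, x ∉ core A B → (dG A B).Adj x y ∧ dd A B y < dd A B x := by
    intro x
    by_cases hx : x ∈ core A B
    · exact ⟨x, fun h => absurd hx h⟩
    · obtain ⟨y, hy⟩ := d_low A B x hx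
      exact ⟨y, fun _ => hy⟩
  choose par hpar using hp
  have hE : (dG A B).edgeSet = (Sym2.map (cemb A B) '' th.edgeSet) ∪
      ((fun x => s(x, par x)) '' (core A B)ᶜ) := by
    ext e
    induction e using Sym2.ind with
    | _ x y =>
    constructor
    · intro h
      rw [mem_edgeSet] at h
      rcases d_class A B x y h with ⟨⟨a, rfl⟩, ⟨b, rfl⟩⟩ | ⟨hx, hl⟩ | ⟨hy, hl⟩
      · exact Or.inl ⟨s(a, b), (cemb_adj A B a b).1 h, rfl⟩
      · right
        refine ⟨x, hx, ?_⟩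
        have := hpar x hx
        rw [d_uniq A B x y (par x) hx h this.1 hl.le this.2.le]
      · right
        refine ⟨y, hy, ?_⟩
        have := hpar y hy
        rw [d_uniq A B y x (par y) hy h.symm this.1 hl.le this.2.le]
        exact Sym2.eq_swap
    · rintro (⟨e, he, h⟩ | ⟨z, hz, h⟩)
      · rw [← h]
        induction e using Sym2.ind with
        | _ a b => exact (cemb_adj A B a b).2 he
      · rw [← h]
        exact (hpar z hz).1
  have hdisj : Disjoint (Sym2.map (cemb A B) '' th.edgeSet)
      ((fun x => s(x, par x)) '' (core A B)ᶜ) := by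
    rw [Set.disjoint_left]
    rintro _ ⟨e, he, rfl⟩ ⟨z, hz, h⟩
    induction e using Sym2.ind with
    | _ a b =>
      have hmem : z ∈ Sym2.map (cemb A B) s(a, b) := by
        rw [← h]; exact Sym2.mem_mk_left _ _
      rw [Sym2.mem_map] at hmem
      obtain ⟨c, _, hc⟩ := hmem
      exact hz ⟨c, hc⟩
  have hinj : Set.InjOn (fun x => s(x, par x)) (core A B)ᶜ := by
    intro x hx y hy h
    rcases Sym2.eq_iff.1 h with ⟨h1, _⟩ | ⟨h1, h2⟩
    · exact h1
    · have a1 := (hpar x hx).2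
      have a2 := (hpar y hy).2
      rw [h2] at a1
      rw [← h1] at a2
      omega
  rw [hE, Set.ncard_union_eq hdisj, Set.ncard_image_of_injective _ (Sym2.map.injective (cemb_inj A B)),
    th_edges, Set.ncard_image_of_injOn hinj]
  have h7 : (core A B).ncard = 7 := by
    unfold core
    rw [← Set.image_univ, Set.ncard_image_of_injective _ (cemb_inj A B), Set.ncard_univ]
    simp [Nat.card_eq_fintype_card]
  have := Set.ncard_add_ncard_compl (core A B)
  omega

theorem aut_core (φ : dG A B ≃g dG A B) (x : Wt A.R B.R) (hx : x ∈ core A B) :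
    φ x ∈ core A B := by
  have := A.fin
  have := B.fin
  have := Wt_finite A.R B.R
  by_contra hc
  let S : Set (Wt A.R B.R) := {y | y ∉ core A B ∧ ∃ x ∈ core A B, φ x = y}
  obtain ⟨y, ⟨hyc, x', ⟨a, rfl⟩, rfl⟩, hmax⟩ :=
    Set.exists_max_image S (dd A B) S.toFinite ⟨φ x, hc, x, hx, rfl⟩
  obtain ⟨b, c, hbc, hb, hc'⟩ := th_two a
  rw [← cemb_adj A B, ← φ.map_adj_iff] at hb hc'
  rcases d_up A B _ _ _ hyc hb hc' (φ.injective.ne ((cemb_inj A B).ne hbc)) with h | h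
  · have := hmax (φ (cemb A B b)) ⟨h.1, _, ⟨b, rfl⟩, rfl⟩
    omega
  · have := hmax (φ (cemb A B c)) ⟨h.1, _, ⟨c, rfl⟩, rfl⟩
    omega

theorem aut_core_iff (φ : dG A B ≃g dG A B) (x : Wt A.R B.R) :
    φ x ∈ core A B ↔ x ∈ core A B := by
  constructor
  · intro h
    simpa using aut_core A B φ.symm _ h
  · exact aut_core A B φ x

theorem aut_shape (φ : dG A B ≃g dG A B) : ∃ t : KK, (∀ i, φ (.hub i) = .hub (t.1 + i)) ∧
    (φ (.ps A.r) = .ps A.r) ∧ (∀ k, φ (.br k B.r) = .br (t + k) B.r) := by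
  have : ∀ a, ∃ b, cemb A B b = φ (cemb A B a) := fun a => aut_core A B φ _ ⟨a, rfl⟩
  choose f hf using this
  obtain ⟨t, h1, h2, h3⟩ := theta_aut f
    (fun a b h => cemb_inj A B (φ.injective (by rw [← hf, ← hf, h])))
    (fun a b h => by
      rw [← cemb_adj A B, hf, hf, φ.map_adj_iff, cemb_adj]; exact h)
  refine ⟨t, fun i => ?_, ?_, fun k => ?_⟩
  · have := hf (.inl i); rw [h1] at this; exact this.symm
  · have := hf (.inr (.inl ())); rw [h2] at this; exact this.symm
  · have := hf (.inr (.inr k)); rw [h3] at this; exact this.symm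

theorem aut_ps (φ : dG A B ≃g dG A B) (h : φ (.ps A.r) = .ps A.r) :
    ∀ n u, A.d u = n → ∃ u', φ (.ps u) = .ps u' := by
  intro n
  induction n using Nat.strong_induction_on with
  | _ n ih =>
    intro u hu
    by_cases hr : u = A.r
    · subst hr; exact ⟨_, h⟩
    · obtain ⟨y, h1, h2⟩ := A.low u hr
      obtain ⟨y', hy'⟩ := ih _ (hu ▸ h2) y rfl
      have hadj : (dG A B).Adj (φ (.ps u)) (φ (.ps y)) := φ.map_adj_iff.2 h1
      have hnc : φ (.ps u) ∉ core A B := by rwa [aut_core_iff, ps_core]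
      rw [hy'] at hadj
      rcases hφ : φ (.ps u) with (i | w | ⟨k, w⟩) <;> rw [hφ] at hadj hnc
      · exact absurd (hub_core A B i) hnc
      · exact ⟨w, rfl⟩
      · exact hadj.elim

theorem aut_br (φ : dG A B ≃g dG A B) (k k' : KK) (h : φ (.br k B.r) = .br k' B.r) :
    ∀ n u, B.d u = n → ∃ u', φ (.br k u) = .br k' u' := by
  intro n
  induction n using Nat.strong_induction_on with
  | _ n ih =>
    intro u hu
    by_cases hr : u = B.r
    · subst hr; exact ⟨_, h⟩
    · obtain ⟨y, h1, h2⟩ := B.low u hr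
      obtain ⟨y', hy'⟩ := ih _ (hu ▸ h2) y rfl
      have hadj : (dG A B).Adj (φ (.br k u)) (φ (.br k y)) := φ.map_adj_iff.2 (Or.inl ⟨rfl, h1⟩)
      have hnc : φ (.br k u) ∉ core A B := by rwa [aut_core_iff, br_core]
      rw [hy'] at hadj
      rcases hφ : φ (.br k u) with (i | w | ⟨l, w⟩) <;> rw [hφ] at hadj hnc
      · exact absurd (hub_core A B i) hnc
      · exact hadj.elim
      · rw [br_core] at hnc
        rcases hadj with ⟨rfl, _⟩ | ⟨h, _⟩
        · exact ⟨w, rfl⟩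
        · exact absurd h hnc

def Ffun (a : D) (g : KK → E) (t : KK) : Wt A.R B.R → Wt A.R B.R
  | .hub i => .hub (t.1 + i)
  | .ps u => .ps (A.ρ a u)
  | .br k v => .br (t + k) (B.ρ (g (t + k)) v)

theorem Ffun_inj (a : D) (g : KK → E) (t : KK) : Function.Injective (Ffun A B a g t) := by
  rintro (i | u | ⟨k, v⟩) (j | u' | ⟨k', v'⟩) h <;> simp only [Ffun] at h
  · simpa using h
  · cases h
  · cases h
  · cases h
  · simpa using h
  · cases h
  · cases h
  · cases h
  · rw [Wt.br.injEq] at h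
    obtain ⟨h1, h2⟩ := h
    have := add_left_cancel h1
    subst this
    rw [(B.ρ (g (t + k))).injective h2]

theorem rt_root {D : Type} [Group D] (A : RT D) (a : D) (u : A.R) : A.ρ a u = A.r ↔ u = A.r := by
  constructor
  · intro h
    rw [← A.fix a] at h
    exact (A.ρ a).injective h
  · rintro rfl; exact A.fix a

theorem Ffun_adj (a : D) (g : KK → E) (t : KK) (x y : Wt A.R B.R) :
    (dG A B).Adj (Ffun A B a g t x) (Ffun A B a g t y) ↔ (dG A B).Adj x y := by
  rcases x with (i | u | ⟨k, v⟩) <;> rcases y with (j | u' | ⟨k', v'⟩) <;>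
    simp only [Ffun, dG, dAdj, rt_root, Prod.fst_add, Prod.snd_add, add_right_inj, ne_eq]
  · exact (A.ρ a).map_adj_iff
  · apply or_congr
    · apply and_congr_right
      rintro rfl
      exact (B.ρ _).map_adj_iff
    · rfl

noncomputable def Fiso (a : D) (g : KK → E) (t : KK) : dG A B ≃g dG A B where
  toEquiv := Equiv.ofBijective (Ffun A B a g t) (by
    have := A.fin
    have := B.fin
    have := Wt_finite A.R B.R
    exact Finite.injective_iff_bijective.1 (Ffun_inj A B a g t))
  map_rel_iff' := by
    intro x y
    exact Ffun_adj A B a g t x y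

theorem Fiso_apply (a : D) (g : KK → E) (t : KK) (x : Wt A.R B.R) :
    Fiso A B a g t x = Ffun A B a g t x := rfl

noncomputable def Fhom : D × ((KK → E) ⋊[transAutHom KK E] K4) →* (dG A B ≃g dG A B) :=
  MonoidHom.mk' (fun p => Fiso A B p.1 p.2.left (Multiplicative.toAdd p.2.right)) (by
    rintro ⟨a, ⟨g, t⟩⟩ ⟨a', ⟨g', t'⟩⟩
    ext1 x
    rw [RelIso.mul_apply, Fiso_apply, Fiso_apply, Fiso_apply]
    rcases x with (i | u | ⟨k, v⟩)
    · simp [Ffun, add_assoc]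
    · simp [Ffun]
    · have e : ∀ k, (transAutHom KK E t) g' k = g' (-(Multiplicative.toAdd t) + k) := fun k => rfl
      simp [Ffun, add_assoc, e])

theorem Fhom_apply (p : D × ((KK → E) ⋊[transAutHom KK E] K4)) (x : Wt A.R B.R) :
    Fhom A B p x = Ffun A B p.1 p.2.left (Multiplicative.toAdd p.2.right) x := rfl

theorem Fhom_inj : Function.Injective (Fhom A B) := by
  rw [injective_iff_map_eq_one]
  rintro ⟨a, ⟨g, t⟩⟩ h
  have h' : ∀ x, Ffun A B a g (Multiplicative.toAdd t) x = x := fun x => by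
    have := DFunLike.congr_fun h x
    exact this
  have ht : Multiplicative.toAdd t = 0 := by
    have := h' (.br 0 B.r)
    simp only [Ffun, Wt.br.injEq] at this
    simpa using this.1
  rw [ht] at h'
  have ha : a = 1 := A.inj (by
    rw [map_one]; ext1 u
    have := h' (.ps u)
    simp only [Ffun, Wt.ps.injEq] at this
    exact this)
  have hg : g = 1 := by
    funext k
    apply B.inj
    rw [Pi.one_apply, map_one]; ext1 v
    have := h' (.br k v)
    simp only [Ffun, Wt.br.injEq, zero_add] at this
    exact this.2
  have ht' : t = 1 := ht
  subst ha hg ht'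
  rfl

theorem Fhom_surj : Function.Surjective (Fhom A B) := by
  intro φ
  have := A.fin
  have := B.fin
  obtain ⟨t, h1, h2, h3⟩ := aut_shape A B φ
  have ha := fun u => aut_ps A B φ h2 _ u rfl
  have hb := fun k u => aut_br A B φ k _ (h3 k) _ u rfl
  choose α hα using ha
  choose g hg using hb
  have αinj : Function.Injective α := by
    intro u u' h
    have := φ.injective ((hα u).trans ((congrArg Wt.ps h).trans (hα u').symm))
    simpa using this
  have ginj : ∀ k, Function.Injective (g k) := by
    intro k u u' h
    have := φ.injective ((hg k u).trans ((congrArg (Wt.br _) h).trans (hg k u').symm))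
    simpa using this
  obtain ⟨a, ha⟩ := A.surj ⟨Equiv.ofBijective α (Finite.injective_iff_bijective.1 αinj), by
    intro x y
    have := φ.map_adj_iff (v := .ps x) (w := .ps y)
    rw [hα, hα] at this
    exact this⟩ (by
      have := hα A.r
      rw [h2] at this
      exact (Wt.ps.inj this).symm)
  have hk : ∀ k, ∃ e, ∀ v, B.ρ e v = g k v := by
    intro k
    obtain ⟨e, he⟩ := B.surj ⟨Equiv.ofBijective (g k) (Finite.injective_iff_bijective.1 (ginj k)), by
      intro x y
      have := φ.map_adj_iff (v := .br k x) (w := .br k y)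
      rw [hg, hg] at this
      simpa [dG, dAdj] using this⟩ (by
        have := hg k B.r
        rw [h3] at this
        exact (Wt.br.inj this).2.symm)
    exact ⟨e, fun v => DFunLike.congr_fun he v⟩
  choose e he using hk
  refine ⟨⟨a, ⟨fun k => e (-t + k), Multiplicative.ofAdd t⟩⟩, ?_⟩
  ext1 x
  rw [Fhom_apply]
  rcases x with (i | u | ⟨k, v⟩)
  · exact (h1 i).symm
  · rw [hα]
    exact congrArg Wt.ps (DFunLike.congr_fun ha u)
  · rw [hg]
    simp only [Ffun, toAdd_ofAdd, neg_add_cancel_left, he]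

end delta

/-- For all finite trees `Ψ` and `T` there is a bicyclic graph `Δ` with
`Aut(Δ) ≅ Aut(Ψ) × (Aut(T) ≀ (Z₂ × Z₂))`, where `Aut(T) ≀ (Z₂ × Z₂) = Aut(T)⁴ ⋊ (Z₂ × Z₂)`
with `Z₂ × Z₂` permuting the four coordinates (indexed by its own elements) by translation. -/
theorem B1_realizable_as_aut_bicyclic
    {U V : Type} [Fintype U] [Fintype V]
    (Ψ : SimpleGraph U) (hΨ : Ψ.IsTree) (T : SimpleGraph V) (hT : T.IsTree) :
    ∃ (W : Type) (_ : Fintype W) (Δ : SimpleGraph W),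
      Δ.IsBicyclic ∧ Nonempty ((Δ ≃g Δ) ≃* (Ψ ≃g Ψ) × wreathK4 (T ≃g T)) := by
  let A := treeRT hΨ
  let B := treeRT hT
  have := A.fin
  have := B.fin
  have := Wt_finite A.R B.R
  exact ⟨Wt A.R B.R, Fintype.ofFinite _, dG A B, ⟨dG_connected A B, dG_edges A B⟩,
    ⟨(MulEquiv.ofBijective (Fhom A B) ⟨Fhom_inj A B, Fhom_surj A B⟩).symm⟩⟩
end

section
/- For all finite trees Ψ, T, Λ and Υ there exists a bicyclic graph Δ such that Aut(Δ) ≅ Aut(Ψ) × ((D⁴ × H² × K²) ⋊ (Z₂ × Z₂)), where D = Aut(T), H = Aut(Λ), K = Aut(Υ), and the generator a of Z₂ × Z₂ sends (d₁,d₂,d₃,d₄,h₁,h₂,k₁,k₂) to (d₃,d₄,d₁,d₂,h₂,h₁,k₁,k₂) while the generator b sends it to (d₂,d₁,d₄,d₃,h₁,h₂,k₂,k₁). -/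
open SimpleGraph

/-- The action of `Z₂ × Z₂` on `D⁴ × H² × K²` in which the generator `a = (1,0)` sends
`(d₁,d₂,d₃,d₄,h₁,h₂,k₁,k₂)` to `(d₃,d₄,d₁,d₂,h₂,h₁,k₁,k₂)` and the generator `b = (0,1)` sends
it to `(d₂,d₁,d₄,d₃,h₁,h₂,k₂,k₁)`: the four `D`-coordinates are indexed by
`(0,0), (0,1), (1,0), (1,1) : Z₂ × Z₂` and translated, and the pairs of `H`- resp.
`K`-coordinates are indexed by `Z₂` and translated by the first resp. second component. -/
def B2act (D H K : Type) [Group D] [Group H] [Group K] :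
    K4 →* MulAut ((ZMod 2 × ZMod 2 → D) × (ZMod 2 → H) × (ZMod 2 → K)) :=
  autProdHom (transAutHom (ZMod 2 × ZMod 2) D)
    (autProdHom ((transAutHom (ZMod 2) H).comp fstK) ((transAutHom (ZMod 2) K).comp sndK))

/-- The group `(D⁴ × H² × K²) ⋊ (Z₂ × Z₂)` appearing in the class `𝓑₂`. -/
def B2group (D H K : Type) [Group D] [Group H] [Group K] : Type :=
  ((ZMod 2 × ZMod 2 → D) × (ZMod 2 → H) × (ZMod 2 → K)) ⋊[B2act D H K] K4

instance (D H K : Type) [Group D] [Group H] [Group K] : Group (B2group D H K) :=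
  inferInstanceAs (Group (_ ⋊[B2act D H K] K4))

/-- Permutations commuting with a self map `p`. -/
def PA {β : Type} (p : β → β) : Subgroup (Equiv.Perm β) where
  carrier := {σ | ∀ x, p (σ x) = σ (p x)}
  mul_mem' := by
    intro a b ha hb x
    simp only [Set.mem_ofPred_eq] at ha hb
    simp [ha, hb]
  one_mem' := by intro x; rfl
  inv_mem' := by
    intro a ha x
    simp only [Set.mem_ofPred_eq] at ha
    apply a.injective
    rw [← ha]; simp

lemma tree_two_closer {V : Type} {T : SimpleGraph V} (hT : T.IsTree) (z : V) {v u w : V}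
    (hu : T.Adj v u) (hw : T.Adj v w) (h1 : T.dist z v = T.dist z u + 1)
    (h2 : T.dist z v = T.dist z w + 1) : u = w := by
  obtain ⟨p, hp, hp'⟩ := hT.connected.exists_path_of_dist z u
  obtain ⟨q, hq, hq'⟩ := hT.connected.exists_path_of_dist z w
  have e1 : (p.concat hu.symm).IsPath :=
    SimpleGraph.Walk.isPath_of_length_eq_dist _ (by simp [h1, hp'])
  have e2 : (q.concat hw.symm).IsPath :=
    SimpleGraph.Walk.isPath_of_length_eq_dist _ (by simp [h2, hq'])
  have := congrArg Subtype.val ((hT.isAcyclic.subsingleton_path _ _).elim ⟨_, e1⟩ ⟨_, e2⟩)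
  simp only at this
  have h := congrArg SimpleGraph.Walk.penultimate this
  simpa using h

lemma tree_convex {V : Type} [Fintype V] {T : SimpleGraph V} (hT : T.IsTree) {v u w : V}
    (hu : T.Adj v u) (hw : T.Adj v w) (huw : u ≠ w) :
    2 * ∑ z, T.dist z v < ∑ z, T.dist z u + ∑ z, T.dist z w := by
  rw [Finset.mul_sum, ← Finset.sum_add_distrib]
  apply Finset.sum_lt_sum
  · intro z _
    have h1 := hT.dist_eq_dist_add_one_of_adj z hu
    have h2 := hT.dist_eq_dist_add_one_of_adj z hw
    have h3 := tree_two_closer hT z hu hw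
    by_contra hc
    apply huw
    apply h3 <;> omega
  · refine ⟨v, Finset.mem_univ _, ?_⟩
    have := SimpleGraph.dist_eq_one_iff_adj.2 hu
    simp [this]

lemma tree_toward {V : Type} [Fintype V] {T : SimpleGraph V} (hT : T.IsTree) {y : V}
    (hy : ∀ v, ∑ z, T.dist z y ≤ ∑ z, T.dist z v) (d : ℕ) : ∀ v, T.dist y v = d + 1 →
    ∃ u, T.Adj v u ∧ T.dist y u = d ∧ ∑ z, T.dist z u ≤ ∑ z, T.dist z v ∧
      (0 < d → ∑ z, T.dist z u < ∑ z, T.dist z v) := by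
  induction d with
  | zero =>
    intro v hv
    refine ⟨y, ?_, by simp, hy v, by simp⟩
    exact (SimpleGraph.dist_eq_one_iff_adj.1 hv).symm
  | succ d ih =>
    intro v hv
    obtain ⟨p, hp, hp'⟩ := hT.connected.exists_path_of_dist y v
    have hnn : ¬ p.Nil := by
      intro h; have := SimpleGraph.Walk.length_eq_zero_iff.2 h; omega
    have ha := p.adj_penultimate hnn
    have hle : T.dist y p.penultimate ≤ d + 1 := by
      have := SimpleGraph.dist_le p.dropLast
      have h2 : p.dropLast.length + 1 = p.length := by simp; omega
      omega
    have h1 := hT.dist_eq_dist_add_one_of_adj y ha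
    have hd : T.dist y p.penultimate = d + 1 := by omega
    obtain ⟨w, hw, hwd, hwl, -⟩ := ih _ hd
    have hc := tree_convex hT ha hw (by rintro rfl; omega)
    have : ∑ z, T.dist z p.penultimate < ∑ z, T.dist z v := by omega
    exact ⟨_, ha.symm, hd, this.le, fun _ => this⟩

lemma tree_dist_iso {V : Type} {T : SimpleGraph V} (φ : T ≃g T) (u v : V) :
    T.dist (φ u) (φ v) = T.dist u v := by
  have key : ∀ (ψ : T ≃g T) (a b : V), T.Reachable a b → T.dist (ψ a) (ψ b) ≤ T.dist a b := by
    intro ψ a b hr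
    obtain ⟨p, hp⟩ := hr.exists_walk_length_eq_dist
    have := SimpleGraph.dist_le (p.map ψ.toHom)
    simpa [hp] using this
  by_cases hr : T.Reachable u v
  · apply le_antisymm (key φ u v hr)
    have := key φ.symm (φ u) (φ v) (hr.map φ.toHom)
    simpa using this
  · rw [SimpleGraph.dist_eq_zero_of_not_reachable hr, SimpleGraph.dist_eq_zero_of_not_reachable]
    intro h
    apply hr
    simpa using h.map φ.symm.toHom

lemma tree_rooted {V : Type} [Fintype V] (T : SimpleGraph V) (hT : T.IsTree) :
    ∃ (β : Type) (_ : Fintype β) (p : β → β) (h : β → ℕ) (r : β), p r = r ∧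
      (∀ x, x ≠ r → h (p x) < h x) ∧ Nonempty ((T ≃g T) ≃* PA p) := by
  classical
  set f : V → ℕ := fun v => ∑ z, T.dist z v with hf
  obtain ⟨m⟩ := hT.connected.nonempty
  obtain ⟨y, -, hy⟩ := Finset.exists_min_image Finset.univ f ⟨m, Finset.mem_univ _⟩
  replace hy : ∀ v, f y ≤ f v := fun v => hy v (Finset.mem_univ _)
  have conv : ∀ v u w, T.Adj v u → T.Adj v w → f u ≤ f v → f w ≤ f v → u = w := by
    intro v u w hu hw h1 h2
    by_contra hne
    have := tree_convex hT hu hw hne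
    simp only [hf] at h1 h2
    omega
  have par : ∀ v, f v ≠ f y → ∃ u, T.Adj v u ∧ f u < f v := by
    intro v hv
    have hne : y ≠ v := by rintro rfl; exact hv rfl
    have hpos := hT.connected.pos_dist_of_ne hne
    obtain ⟨d, hd⟩ : ∃ d, T.dist y v = d + 1 := ⟨T.dist y v - 1, by omega⟩
    obtain ⟨u, hu, hud, hle, hlt⟩ := tree_toward hT hy d v hd
    refine ⟨u, hu, ?_⟩
    rcases Nat.eq_zero_or_pos d with h0 | h0
    · have : y = u := by
        rw [h0] at hud
        exact (hT.connected.dist_eq_zero_iff).1 hud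
      subst this
      exact lt_of_le_of_ne (hy v) (Ne.symm hv)
    · exact hlt h0
  have hM : ∀ x x', f x = f y → f x' = f y → x ≠ x' → T.Adj x x' := by
    intro x x' hx hx' hne
    have hpos := hT.connected.pos_dist_of_ne hne
    obtain ⟨d, hd⟩ : ∃ d, T.dist x x' = d + 1 := ⟨T.dist x x' - 1, by omega⟩
    obtain ⟨u, hu, hud, hle, hlt⟩ := tree_toward (y := x) hT
      (fun v => by have := hy v; simp only [hf] at *; omega) d x' hd
    rcases Nat.eq_zero_or_pos d with h0 | h0
    · rw [h0] at hd
      exact SimpleGraph.dist_eq_one_iff_adj.1 hd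
    · have := hlt h0
      have h2 := hy u
      simp only [hf] at *
      omega
  choose! g hg1 hg2 using par
  have hfφ : ∀ (φ : T ≃g T) v, f (φ v) = f v := by
    intro φ v
    simp only [hf]
    rw [← Equiv.sum_comp φ.toEquiv]
    apply Finset.sum_congr rfl
    intro z _
    exact tree_dist_iso φ z v
  have hgφ : ∀ (φ : T ≃g T) v, f v ≠ f y → g (φ v) = φ (g v) := by
    intro φ v hv
    have hv' : f (φ v) ≠ f y := by rwa [hfφ]
    refine conv (φ v) _ _ (hg1 _ hv') (φ.map_rel_iff.2 (hg1 _ hv)) (hg2 _ hv').le ?_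
    rw [hfφ, hfφ]; exact (hg2 _ hv).le
  let p : Option V → Option V := fun x => x.elim none (fun v => if f v = f y then none else some (g v))
  have pn : p none = none := rfl
  have ps : ∀ v, p (some v) = if f v = f y then none else some (g v) := fun _ => rfl
  let h : Option V → ℕ := fun x => x.elim 0 (fun v => f v + 1)
  have hadj : ∀ u v, T.Adj u v ↔ (p (some u) = some v ∨ p (some v) = some u ∨
      (u ≠ v ∧ p (some u) = none ∧ p (some v) = none)) := by
    intro u v
    constructor
    · intro hA
      by_cases hu : f u = f y <;> by_cases hv : f v = f y
      · right; right; exact ⟨hA.ne, by simp [ps, hu], by simp [ps, hv]⟩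
      · right; left
        simp only [ps, hv, if_false, Option.some.injEq]
        refine conv v _ _ (hg1 _ hv) hA.symm (hg2 _ hv).le ?_
        rw [hu]; exact hy v
      · left
        simp only [ps, hu, if_false, Option.some.injEq]
        refine conv u _ _ (hg1 _ hu) hA (hg2 _ hu).le ?_
        rw [hv]; exact hy u
      · rcases le_total (f u) (f v) with hl | hl
        · right; left
          simp only [ps, hv, if_false, Option.some.injEq]
          exact conv v _ _ (hg1 _ hv) hA.symm (hg2 _ hv).le hl
        · left
          simp only [ps, hu, if_false, Option.some.injEq]
          exact conv u _ _ (hg1 _ hu) hA (hg2 _ hu).le hl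
    · rintro (h1 | h1 | ⟨h0, h1, h2⟩)
      · rw [ps] at h1
        split_ifs at h1 with hu
        cases h1
        exact hg1 _ hu
      · rw [ps] at h1
        split_ifs at h1 with hu
        cases h1
        exact (hg1 _ hu).symm
      · apply hM _ _ _ _ h0
        · by_contra hc; simp [ps, hc] at h1
        · by_contra hc; simp [ps, hc] at h2
  refine ⟨Option V, inferInstance, p, h, none, pn, ?_, ?_⟩
  · intro x hx
    cases x with
    | none => exact absurd rfl hx
    | some v =>
      rw [ps]
      split_ifs with hv
      · simp [h]
      · simp only [h, Option.elim]
        have := hg2 _ hv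
        omega
  · have mem : ∀ φ : T ≃g T, Equiv.optionCongr φ.toEquiv ∈ PA p := by
      intro φ x
      cases x with
      | none => rfl
      | some v =>
        change p (some (φ v)) = Option.map φ (p (some v))
        rw [ps, ps, hfφ]
        split_ifs with hv
        · rfl
        · simp [hgφ φ v hv]
    let F : (T ≃g T) →* PA p :=
      { toFun := fun φ => ⟨Equiv.optionCongr φ.toEquiv, mem φ⟩
        map_one' := by
          ext x : 2
          cases x <;> rfl
        map_mul' := by
          intro a b
          ext x : 2
          cases x <;> rfl }
    refine ⟨MulEquiv.ofBijective F ⟨?_, ?_⟩⟩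
    · intro a b hab
      ext v
      have := congrArg (fun s : PA p => s.1 (some v)) hab
      exact Option.some.inj this
    · rintro ⟨σ, hσ⟩
      have hfix : ∀ x, p x = x → x = none := by
        intro x hx
        cases x with
        | none => rfl
        | some v =>
          rw [ps] at hx
          split_ifs at hx with hv
          have := hg2 _ hv
          rw [Option.some.inj hx] at this
          omega
      have hn : σ none = none := by
        apply hfix
        rw [hσ none, pn]
      have hs : ∀ v, some (Equiv.removeNone σ v) = σ (some v) := by
        intro v
        apply Equiv.removeNone_some
        have : σ (some v) ≠ none := by
          intro h
          rw [← hn] at h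
          exact absurd (σ.injective h) (by simp)
        exact Option.ne_none_iff_exists'.1 this
      have e1 : ∀ u v, (p (some (Equiv.removeNone σ u)) = some (Equiv.removeNone σ v)) ↔
          p (some u) = some v := by
        intro u v
        rw [hs, hs, hσ, σ.apply_eq_iff_eq]
      have e2 : ∀ u, (p (some (Equiv.removeNone σ u)) = none) ↔ p (some u) = none := by
        intro u
        rw [hs, hσ]
        nth_rw 1 [← hn]
        rw [σ.apply_eq_iff_eq]
      refine ⟨⟨Equiv.removeNone σ, ?_⟩, ?_⟩
      · intro u v
        rw [hadj, hadj, e1, e1, e2, e2]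
        simp
      · apply Subtype.ext
        apply Equiv.ext
        intro x
        cases x with
        | none => exact hn.symm
        | some v => exact hs v

/-- A forest on `W` whose roots are indexed by `C`. -/
structure RF (C W : Type) where
  p : W → W
  h : W → ℕ
  ρ : W → C
  s : C → W
  hs : ∀ c, ρ (s c) = c
  hρ : ∀ w, ρ (p w) = ρ w
  hps : ∀ c, p (s c) = s c
  hp : ∀ w, w ≠ s (ρ w) → h (p w) < h w

namespace RF

variable {C W : Type} (R : RF C W)

lemma fix_iff (w : W) : R.p w = w ↔ w = R.s (R.ρ w) := by
  constructor
  · intro h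
    by_contra hc
    have := R.hp w hc
    rw [h] at this
    exact lt_irrefl _ this
  · intro h
    rw [h, R.hps]

lemma hlt {w : W} (h : R.p w ≠ w) : R.h (R.p w) < R.h w :=
  R.hp w (fun hc => h ((R.fix_iff w).2 hc))

/-- The core graph with the forest attached. -/
def graph (G : SimpleGraph C) : SimpleGraph W where
  Adj u v := (u ≠ v ∧ (R.p u = v ∨ R.p v = u)) ∨
    (R.p u = u ∧ R.p v = v ∧ G.Adj (R.ρ u) (R.ρ v))
  symm := ⟨by
    rintro u v (⟨h1, h2⟩ | ⟨h1, h2, h3⟩)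
    · exact Or.inl ⟨h1.symm, h2.symm⟩
    · exact Or.inr ⟨h2, h1, h3.symm⟩⟩
  loopless := ⟨by
    rintro u (⟨h1, h2⟩ | ⟨h1, h2, h3⟩)
    · exact h1 rfl
    · exact G.loopless.irrefl _ h3⟩

variable (G : SimpleGraph C)

lemma adj_iff (u v : W) : (R.graph G).Adj u v ↔ (u ≠ v ∧ (R.p u = v ∨ R.p v = u)) ∨
    (R.p u = u ∧ R.p v = v ∧ G.Adj (R.ρ u) (R.ρ v)) := Iff.rfl

lemma adj_s {c d : C} (h : G.Adj c d) : (R.graph G).Adj (R.s c) (R.s d) := by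
  right
  simpa [R.hps, R.hs] using h

lemma reach_root (n : ℕ) : ∀ w, R.h w = n → (R.graph G).Reachable w (R.s (R.ρ w)) := by
  induction n using Nat.strong_induction_on with
  | _ n ih =>
    intro w hw
    by_cases hp : R.p w = w
    · rw [← (R.fix_iff w).1 hp]
    · have hl := R.hlt hp
      have := ih _ (hw ▸ hl) (R.p w) rfl
      rw [R.hρ] at this
      refine SimpleGraph.Reachable.trans (SimpleGraph.Adj.reachable ?_) this
      exact Or.inl ⟨fun h => hp h.symm, Or.inl rfl⟩

lemma connected (hG : G.Connected) : (R.graph G).Connected := by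
  let f : G →g R.graph G := ⟨R.s, fun h => R.adj_s G h⟩
  obtain ⟨c⟩ := hG.nonempty
  rw [SimpleGraph.connected_iff]
  refine ⟨?_, ⟨R.s c⟩⟩
  intro u v
  have h1 := R.reach_root G _ u rfl
  have h2 := R.reach_root G _ v rfl
  have h3 : (R.graph G).Reachable (R.s (R.ρ u)) (R.s (R.ρ v)) :=
    (hG.preconnected (R.ρ u) (R.ρ v)).map f
  exact h1.trans (h3.trans h2.symm)

lemma s_inj : Function.Injective R.s := by
  intro a b h
  rw [← R.hs a, h, R.hs]

lemma edges_eq : (R.graph G).edgeSet =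
    (Sym2.map R.s '' G.edgeSet) ∪ ((fun w => s(w, R.p w)) '' {w | R.p w ≠ w}) := by
  ext e
  induction e using Sym2.ind with
  | _ u v =>
    simp only [SimpleGraph.mem_edgeSet, Set.mem_union, Set.mem_image, adj_iff]
    constructor
    · rintro (⟨h1, h2 | h2⟩ | ⟨h1, h2, h3⟩)
      · right
        refine ⟨u, ?_, by rw [h2]⟩
        simp only [Set.mem_ofPred_eq]; rw [h2]; exact h1.symm
      · right
        refine ⟨v, ?_, by rw [h2, Sym2.eq_swap]⟩
        simp only [Set.mem_ofPred_eq]; rw [h2]; exact h1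
      · left
        refine ⟨s(R.ρ u, R.ρ v), h3, ?_⟩
        rw [Sym2.map_mk, ← (R.fix_iff u).1 h1, ← (R.fix_iff v).1 h2]
    · rintro (⟨e, he, h⟩ | ⟨w, hw, h⟩)
      · induction e using Sym2.ind with
        | _ c d =>
          rw [Sym2.map_mk] at h
          have : s(u, v) ∈ (R.graph G).edgeSet := by
            rw [← h]; exact R.adj_s G he
          exact this
      · have : s(u, v) ∈ (R.graph G).edgeSet := by
          rw [← h]; exact Or.inl ⟨Ne.symm hw, Or.inl rfl⟩
        exact this

lemma edges_card [Finite C] [Finite W] (hG : G.edgeSet.ncard = Nat.card C + 1) :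
    (R.graph G).edgeSet.ncard = Nat.card W + 1 := by
  rw [edges_eq, Set.ncard_union_eq _ (Set.toFinite _) (Set.toFinite _),
    Set.ncard_image_of_injective _ (Sym2.map.injective R.s_inj), Set.ncard_image_of_injOn, hG]
  · have h1 : (Set.range R.s).ncard = Nat.card C := by
      rw [← Set.image_univ, Set.ncard_image_of_injective _ R.s_inj, Set.ncard_univ]
    have h2 : {w | R.p w ≠ w} = (Set.range R.s)ᶜ := by
      ext w
      simp only [Set.mem_ofPred_eq, Set.mem_compl_iff, ne_eq, R.fix_iff, Set.mem_range, not_iff_not]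
      constructor
      · intro h; exact ⟨_, h.symm⟩
      · rintro ⟨c, rfl⟩; rw [R.hs]
    have h3 := Set.ncard_add_ncard_compl (Set.range R.s)
    rw [h2]
    omega
  · intro a ha b hb hab
    simp only at hab
    rw [Sym2.eq_iff] at hab
    rcases hab with ⟨h, -⟩ | ⟨h1, h2⟩
    · exact h
    · have := R.hlt ha
      have := R.hlt hb
      rw [h2] at *
      rw [← h1] at *
      omega
  · rw [Set.disjoint_left]
    rintro e ⟨e', he', rfl⟩ ⟨w, hw, h⟩
    induction e' using Sym2.ind with
    | _ c d =>
      rw [Sym2.map_mk] at h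
      simp only [Sym2.eq_iff] at h
      apply hw
      rcases h with ⟨h, -⟩ | ⟨h, -⟩ <;> rw [h, R.hps]

lemma good_sub [Finite W] (S : Set W)
    (hS : ∀ w ∈ S, ∃ x ∈ S, ∃ y ∈ S, x ≠ y ∧ (R.graph G).Adj w x ∧ (R.graph G).Adj w y) :
    ∀ w ∈ S, R.p w = w := by
  by_contra hc
  push Not at hc
  obtain ⟨w, ⟨hwS, hwp⟩, hmax⟩ := Set.exists_max_image {w | w ∈ S ∧ R.p w ≠ w} R.h (Set.toFinite _)
    (by obtain ⟨w, h1, h2⟩ := hc; exact ⟨w, h1, h2⟩)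
  have key : ∀ x ∈ S, (R.graph G).Adj w x → x = R.p w := by
    rintro x hx (⟨h1, h2 | h2⟩ | ⟨h1, -⟩)
    · exact h2.symm
    · have hne : R.p x ≠ x := by rw [h2]; exact h1
      have := hmax x ⟨hx, hne⟩
      have h3 := R.hlt hne
      rw [h2] at h3
      omega
    · exact absurd h1 hwp
  obtain ⟨x, hx, y, hy, hxy, h1, h2⟩ := hS w hwS
  exact hxy ((key x hx h1).trans (key y hy h2).symm)

lemma fix_of_fix [Finite W] (hG : ∀ c, ∃ x y, x ≠ y ∧ G.Adj c x ∧ G.Adj c y)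
    (φ : R.graph G ≃g R.graph G) (w : W) (hw : R.p w = w) : R.p (φ w) = φ w := by
  apply R.good_sub G (φ '' {w | R.p w = w}) _ _ ⟨w, hw, rfl⟩
  rintro _ ⟨v, hv, rfl⟩
  simp only [Set.mem_ofPred_eq] at hv
  obtain ⟨x, y, hxy, hx, hy⟩ := hG (R.ρ v)
  refine ⟨φ (R.s x), ⟨_, R.hps x, rfl⟩, φ (R.s y), ⟨_, R.hps y, rfl⟩, ?_, ?_, ?_⟩
  · intro h; exact hxy (R.s_inj (φ.injective h))
  · rw [φ.map_adj_iff, (R.fix_iff v).1 hv]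
    exact R.adj_s G hx
  · rw [φ.map_adj_iff, (R.fix_iff v).1 hv]
    exact R.adj_s G hy

lemma fix_iff_fix [Finite W] (hG : ∀ c, ∃ x y, x ≠ y ∧ G.Adj c x ∧ G.Adj c y)
    (φ : R.graph G ≃g R.graph G) (w : W) : R.p (φ w) = φ w ↔ R.p w = w := by
  refine ⟨fun h => ?_, R.fix_of_fix G hG φ w⟩
  simpa using R.fix_of_fix G hG φ.symm _ h

lemma comm [Finite W] (hG : ∀ c, ∃ x y, x ≠ y ∧ G.Adj c x ∧ G.Adj c y)
    (φ : R.graph G ≃g R.graph G) (n : ℕ) : ∀ w, R.h w = n → R.p (φ w) = φ (R.p w) := by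
  induction n using Nat.strong_induction_on with
  | _ n ih =>
    intro w hw
    by_cases hp : R.p w = w
    · rw [hp, R.fix_iff_fix G hG, hp]
    · have hl := R.hlt hp
      have hI := ih _ (hw ▸ hl) (R.p w) rfl
      have hadj : (R.graph G).Adj (φ w) (φ (R.p w)) := by
        rw [φ.map_adj_iff]
        exact Or.inl ⟨Ne.symm hp, Or.inl rfl⟩
      rcases hadj with ⟨h1, h2 | h2⟩ | ⟨h1, -⟩
      · exact h2
      · rw [hI] at h2
        have h3 := φ.injective h2
        by_cases hpp : R.p (R.p w) = R.p w
        · exact absurd (hpp.symm.trans h3) hp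
        · have := R.hlt hpp
          rw [h3] at this
          omega
      · exact absurd ((R.fix_iff_fix G hG φ w).1 h1) hp

lemma root_comm [Finite W] (hG : ∀ c, ∃ x y, x ≠ y ∧ G.Adj c x ∧ G.Adj c y)
    (φ : R.graph G ≃g R.graph G) (n : ℕ) :
    ∀ w, R.h w = n → R.ρ (φ w) = R.ρ (φ (R.s (R.ρ w))) := by
  induction n using Nat.strong_induction_on with
  | _ n ih =>
    intro w hw
    by_cases hp : R.p w = w
    · rw [← (R.fix_iff w).1 hp]
    · have hl := R.hlt hp
      have hI := ih _ (hw ▸ hl) (R.p w) rfl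
      rw [R.hρ, ← R.comm G hG φ _ w rfl, R.hρ] at hI
      exact hI

lemma core_iso [Finite W] (hG : ∀ c, ∃ x y, x ≠ y ∧ G.Adj c x ∧ G.Adj c y)
    (φ : R.graph G ≃g R.graph G) :
    ∃ f : G ≃g G, ∀ w, R.ρ (φ w) = f (R.ρ w) := by
  have hr : ∀ (ψ : R.graph G ≃g R.graph G) w, R.ρ (ψ w) = R.ρ (ψ (R.s (R.ρ w))) :=
    fun ψ w => R.root_comm G hG ψ _ w rfl
  refine ⟨⟨⟨fun c => R.ρ (φ (R.s c)), fun c => R.ρ (φ.symm (R.s c)), ?_, ?_⟩, ?_⟩, hr φ⟩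
  · intro c
    simp only
    rw [← hr φ.symm]; simp [R.hs]
  · intro c
    simp only
    rw [← hr φ]; simp [R.hs]
  · intro c d
    have h1 := R.fix_of_fix G hG φ _ (R.hps c)
    have h2 := R.fix_of_fix G hG φ _ (R.hps d)
    have h3 := φ.map_adj_iff (v := R.s c) (w := R.s d)
    simp only [Equiv.coe_fn_mk]
    rw [adj_iff, adj_iff] at h3
    simp only [h1, h2, R.hps, R.hs, true_and, φ.injective.ne_iff, φ.injective.eq_iff] at h3
    grind

/-- A permutation commuting with the parent map, over a core automorphism, is an automorphism. -/
lemma adj_of_comm (φ : Equiv.Perm W) (hφ : ∀ w, R.p (φ w) = φ (R.p w)) (f : C → C)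
    (hf : ∀ w, R.ρ (φ w) = f (R.ρ w)) (hfG : ∀ c d, G.Adj (f c) (f d) ↔ G.Adj c d) (u v : W) :
    (R.graph G).Adj (φ u) (φ v) ↔ (R.graph G).Adj u v := by
  simp only [adj_iff, hφ, hf, hfG, φ.injective.ne_iff, φ.injective.eq_iff]

lemma exists_PA {β : Type} [Finite β] (p : β → β) (φ : W → W) (hφi : Function.Injective φ)
    (hφ : ∀ w, R.p (φ w) = φ (R.p w)) (ι ι' : β → W) (hι : Function.Injective ι)
    (hι' : Function.Injective ι') (hc : ∀ x, R.p (ι x) = ι (p x))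
    (hc' : ∀ x, R.p (ι' x) = ι' (p x)) (hm : ∀ x, ∃ y, φ (ι x) = ι' y) :
    ∃ σ : PA p, ∀ x, φ (ι x) = ι' (σ.1 x) := by
  choose g hg using hm
  have hgi : Function.Injective g := by
    intro a b hab
    apply hι
    apply hφi
    rw [hg, hg, hab]
  refine ⟨⟨Equiv.ofBijective g (Finite.injective_iff_bijective.1 hgi), ?_⟩, hg⟩
  intro x
  apply hι'
  simp only [Equiv.ofBijective_apply]
  rw [← hc', ← hg, hφ, hc, hg]

end RF

/-- The nine core vertices. -/
inductive C9 : Type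
  | m : C9
  | P (i : ZMod 2) : C9
  | K (j : ZMod 2) : C9
  | X (ij : ZMod 2 × ZMod 2) : C9
  deriving DecidableEq, Fintype

namespace C9

/-- Adjacency of the core. -/
def adj : C9 → C9 → Bool
  | m, P _ => true
  | P _, m => true
  | P i, X ij => decide (i = ij.1)
  | X ij, P i => decide (i = ij.1)
  | K j, X ij => decide (j = ij.2)
  | X ij, K j => decide (j = ij.2)
  | _, _ => false

/-- The core theta graph. -/
def graph : SimpleGraph C9 where
  Adj a b := adj a b = true
  symm := ⟨by decide⟩
  loopless := ⟨by decide⟩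

instance : DecidableRel graph.Adj := fun a b => inferInstanceAs (Decidable (adj a b = true))

/-- Translation of the core. -/
def act (q : ZMod 2 × ZMod 2) : C9 → C9
  | m => m
  | P i => P (q.1 + i)
  | K j => K (q.2 + j)
  | X ij => X (q + ij)

lemma act_adj : ∀ q c d, graph.Adj (act q c) (act q d) ↔ graph.Adj c d := by decide

lemma two : ∀ c, ∃ x y, x ≠ y ∧ graph.Adj c x ∧ graph.Adj c y := by decide

lemma XP : ∀ ij : ZMod 2 × ZMod 2, graph.Adj (X ij) (P ij.1) := by decide

lemma XK : ∀ ij : ZMod 2 × ZMod 2, graph.Adj (X ij) (K ij.2) := by decide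

lemma conn : graph.Connected := by
  have h0 : ∀ i, graph.Adj (P i) m := by decide
  have h1 : ∀ ij : ZMod 2 × ZMod 2, graph.Adj (X ij) (P ij.1) := by decide
  have h2 : ∀ j, graph.Adj (K j) (X (0, j)) := by decide
  have r0 : ∀ i, graph.Reachable (P i) m := fun i => (h0 i).reachable
  have r1 : ∀ ij, graph.Reachable (X ij) m := fun ij => (h1 ij).reachable.trans (r0 _)
  have r2 : ∀ j, graph.Reachable (K j) m := fun j => (h2 j).reachable.trans (r1 _)
  have r : ∀ c, graph.Reachable c m := by
    intro c
    cases c with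
    | m => rfl
    | P i => exact r0 i
    | K j => exact r2 j
    | X ij => exact r1 ij
  rw [SimpleGraph.connected_iff]
  exact ⟨fun u v => (r u).trans (r v).symm, ⟨m⟩⟩

set_option maxRecDepth 10000 in
lemma edges : graph.edgeSet.ncard = Nat.card C9 + 1 := by
  rw [Set.ncard_eq_toFinset_card', Nat.card_eq_fintype_card]
  decide

lemma core_aut (f : graph ≃g graph) : ∃ q, ∀ c, f c = act q c := by
  have hd : ∀ c, graph.degree (f c) = graph.degree c := fun c => f.degree_eq c
  have hP : ∀ i, ∃ j, f (P i) = P j := by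
    intro i
    have h1 : ∀ c, graph.degree c = 3 → ∃ j, c = P j := by decide
    have h2 : ∀ i, graph.degree (P i) = 3 := by decide
    exact h1 _ (by rw [hd, h2])
  have hP' : ∀ c, (∃ j, f c = P j) → ∃ i, c = P i := by
    intro c ⟨j, hj⟩
    have h1 : ∀ c, graph.degree c = 3 → ∃ j, c = P j := by decide
    have h2 : ∀ i, graph.degree (P i) = 3 := by decide
    apply h1
    rw [← hd, hj, h2]
  have hadj : ∀ c d, graph.Adj (f c) (f d) ↔ graph.Adj c d := fun c d => f.map_adj_iff
  have hX : ∀ ij, ∃ kl, f (X ij) = X kl := by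
    intro ij
    obtain ⟨a, ha⟩ := hP ij.1
    have e1 : graph.Adj (f (X ij)) (P a) := by
      rw [← ha, hadj]; exact XP ij
    have e2 : ∃ c, graph.Adj (f (X ij)) c ∧ ∀ i, c ≠ P i := by
      refine ⟨f (K ij.2), ?_, ?_⟩
      · rw [hadj]; exact XK ij
      · intro i hi
        obtain ⟨k, hk⟩ := hP' _ ⟨i, hi⟩
        cases hk
    have h3 : ∀ a c, graph.Adj c (P a) → (∃ d, graph.Adj c d ∧ ∀ i, d ≠ P i) →
      ∃ kl, c = X kl := by decide
    exact h3 _ _ e1 e2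
  have hm : f m = m := by
    obtain ⟨a, ha⟩ := hP 0
    obtain ⟨b, hb⟩ := hP 1
    have hab : a ≠ b := by
      rintro rfl
      have := f.injective (ha.trans hb.symm)
      revert this; decide
    have e1 : graph.Adj (f m) (P a) := by rw [← ha, hadj]; decide
    have e2 : graph.Adj (f m) (P b) := by rw [← hb, hadj]; decide
    have h : ∀ a b c, a ≠ b → graph.Adj c (P a) → graph.Adj c (P b) → c = m := by decide
    exact h a b _ hab e1 e2
  have hK : ∀ j, ∃ k, f (K j) = K k := by
    intro j
    rcases hc : f (K j) with _ | i | k | kl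
    · exact absurd (f.injective (hc.trans hm.symm)) (by simp)
    · obtain ⟨k, hk⟩ := hP' _ ⟨i, hc⟩
      cases hk
    · exact ⟨k, rfl⟩
    · obtain ⟨xy, hxy⟩ := hX (0, j)
      have : graph.Adj (f (K j)) (f (X (0, j))) := by rw [hadj]; exact (XK (0, j)).symm
      rw [hc, hxy] at this
      cases this
  choose a ha using hP
  choose b hb using hK
  choose x hx using hX
  have hxe : ∀ ij, x ij = (a ij.1, b ij.2) := by
    intro ij
    have e1 : graph.Adj (f (X ij)) (f (P ij.1)) := by rw [hadj]; exact XP ij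
    have e2 : graph.Adj (f (X ij)) (f (K ij.2)) := by rw [hadj]; exact XK ij
    rw [hx, ha] at e1
    rw [hx, hb] at e2
    have h : ∀ (kl : ZMod 2 × ZMod 2) a b, graph.Adj (X kl) (P a) → graph.Adj (X kl) (K b) →
      kl = (a, b) := by decide
    exact h _ _ _ e1 e2
  have tr : ∀ u : ZMod 2 → ZMod 2, u 0 ≠ u 1 → ∀ i, u i = u 0 + i := by decide
  have ha' := tr a (by
    intro h
    have := f.injective ((ha 0).trans ((congrArg P h).trans (ha 1).symm))
    revert this; decide)
  have hb' := tr b (by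
    intro h
    have := f.injective ((hb 0).trans ((congrArg K h).trans (hb 1).symm))
    revert this; decide)
  refine ⟨(a 0, b 0), ?_⟩
  intro c
  cases c with
  | m => exact hm
  | P i => rw [ha, ha']; rfl
  | K j => rw [hb, hb']; rfl
  | X ij => rw [hx, hxe, ha', hb']; rfl

end C9

/-- Vertices of the final graph. -/
inductive WW (BA BD BH BK : Type) : Type
  | m (x : BA) : WW BA BD BH BK
  | P (i : ZMod 2) (x : BH) : WW BA BD BH BK
  | K (j : ZMod 2) (x : BK) : WW BA BD BH BK
  | X (ij : ZMod 2 × ZMod 2) (x : BD) : WW BA BD BH BK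

lemma WW.fin (BA BD BH BK : Type) [Finite BA] [Finite BD] [Finite BH] [Finite BK] :
    Finite (WW BA BD BH BK) := by
  let f : BA ⊕ (ZMod 2 × BH) ⊕ (ZMod 2 × BK) ⊕ ((ZMod 2 × ZMod 2) × BD) → WW BA BD BH BK
    | .inl x => .m x
    | .inr (.inl (i, x)) => .P i x
    | .inr (.inr (.inl (i, x))) => .K i x
    | .inr (.inr (.inr (i, x))) => .X i x
  apply Finite.of_surjective f
  intro w
  cases w with
  | m x => exact ⟨.inl x, rfl⟩
  | P i x => exact ⟨.inr (.inl (i, x)), rfl⟩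
  | K i x => exact ⟨.inr (.inr (.inl (i, x))), rfl⟩
  | X i x => exact ⟨.inr (.inr (.inr (i, x))), rfl⟩

lemma zz_cancel : ∀ a b : ZMod 2, a + (a + b) = b := by decide

lemma B2_mul {D H K : Type} [Group D] [Group H] [Group K] (g g' : B2group D H K) :
    (∀ ij, (g * g').left.1 ij = g.left.1 ij * g'.left.1 (-g.right.toAdd + ij)) ∧
    (∀ i, (g * g').left.2.1 i = g.left.2.1 i * g'.left.2.1 (-g.right.toAdd.1 + i)) ∧
    (∀ i, (g * g').left.2.2 i = g.left.2.2 i * g'.left.2.2 (-g.right.toAdd.2 + i)) ∧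
    (g * g').right.toAdd = g.right.toAdd + g'.right.toAdd :=
  ⟨fun _ => rfl, fun _ => rfl, fun _ => rfl, rfl⟩

lemma main_aux {BA BD BH BK A D H K : Type} [Fintype BA] [Fintype BD] [Fintype BH] [Fintype BK]
    [Group A] [Group D] [Group H] [Group K]
    (pA : BA → BA) (hA : BA → ℕ) (rA : BA) (a1 : pA rA = rA) (a2 : ∀ x, x ≠ rA → hA (pA x) < hA x)
    (eA : A ≃* PA pA)
    (pD : BD → BD) (hD : BD → ℕ) (rD : BD) (d1 : pD rD = rD) (d2 : ∀ x, x ≠ rD → hD (pD x) < hD x)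
    (eD : D ≃* PA pD)
    (pH : BH → BH) (hH : BH → ℕ) (rH : BH) (h1 : pH rH = rH) (h2 : ∀ x, x ≠ rH → hH (pH x) < hH x)
    (eH : H ≃* PA pH)
    (pK : BK → BK) (hK : BK → ℕ) (rK : BK) (k1 : pK rK = rK) (k2 : ∀ x, x ≠ rK → hK (pK x) < hK x)
    (eK : K ≃* PA pK) :
    ∃ (W : Type) (_ : Fintype W) (Δ : SimpleGraph W),
      Δ.IsBicyclic ∧ Nonempty ((Δ ≃g Δ) ≃* A × B2group D H K) := by
  classical
  have := WW.fin BA BD BH BK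
  let R : RF C9 (WW BA BD BH BK) :=
    { p := fun
        | .m x => .m (pA x)
        | .P i x => .P i (pH x)
        | .K i x => .K i (pK x)
        | .X i x => .X i (pD x)
      h := fun
        | .m x => hA x
        | .P _ x => hH x
        | .K _ x => hK x
        | .X _ x => hD x
      ρ := fun
        | .m _ => .m
        | .P i _ => .P i
        | .K i _ => .K i
        | .X i _ => .X i
      s := fun
        | .m => .m rA
        | .P i => .P i rH
        | .K i => .K i rK
        | .X i => .X i rD
      hs := by rintro (_ | _ | _ | _) <;> rfl
      hρ := by rintro (_ | _ | _ | _) <;> rfl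
      hps := by rintro (_ | _ | _ | _) <;> simp [a1, h1, k1, d1]
      hp := by
        rintro (x | ⟨i, x⟩ | ⟨i, x⟩ | ⟨i, x⟩) hx
        · exact a2 x (by rintro rfl; exact hx rfl)
        · exact h2 x (by rintro rfl; exact hx rfl)
        · exact k2 x (by rintro rfl; exact hx rfl)
        · exact d2 x (by rintro rfl; exact hx rfl) }
  refine ⟨WW BA BD BH BK, Fintype.ofFinite _, R.graph C9.graph,
    ⟨R.connected _ C9.conn, R.edges_card _ C9.edges⟩, ?_⟩
  let F : A × B2group D H K → WW BA BD BH BK → WW BA BD BH BK := fun g w => match w with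
    | .m x => .m ((eA g.1).1 x)
    | .P i x => .P (g.2.right.toAdd.1 + i) ((eH (g.2.left.2.1 (g.2.right.toAdd.1 + i))).1 x)
    | .K i x => .K (g.2.right.toAdd.2 + i) ((eK (g.2.left.2.2 (g.2.right.toAdd.2 + i))).1 x)
    | .X i x => .X (g.2.right.toAdd + i) ((eD (g.2.left.1 (g.2.right.toAdd + i))).1 x)
  have Fone : F 1 = id := by
    funext w
    rcases w with x | ⟨i, x⟩ | ⟨i, x⟩ | ⟨i, x⟩
    · change WW.m ((eA 1).1 x) = _
      simp
    · change WW.P (0 + i) ((eH 1).1 x) = _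
      simp
    · change WW.K (0 + i) ((eK 1).1 x) = _
      simp
    · change WW.X (0 + i) ((eD 1).1 x) = _
      simp
  have Fmul : ∀ g g', F (g * g') = F g ∘ F g' := by
    intro g g'
    obtain ⟨m1, m2, m3, m4⟩ := B2_mul g.2 g'.2
    funext w
    rcases w with x | ⟨i, x⟩ | ⟨i, x⟩ | ⟨i, x⟩
    · change WW.m ((eA (g.1 * g'.1)).1 x) = WW.m ((eA g.1).1 ((eA g'.1).1 x))
      simp
    · change WW.P ((g.2 * g'.2).right.toAdd.1 + i)
        ((eH ((g.2 * g'.2).left.2.1 ((g.2 * g'.2).right.toAdd.1 + i))).1 x) =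
        WW.P (g.2.right.toAdd.1 + (g'.2.right.toAdd.1 + i))
          ((eH (g.2.left.2.1 (g.2.right.toAdd.1 + (g'.2.right.toAdd.1 + i)))).1
            ((eH (g'.2.left.2.1 (g'.2.right.toAdd.1 + i))).1 x))
      rw [m2, m4]
      simp [add_assoc, zz_cancel]
    · change WW.K ((g.2 * g'.2).right.toAdd.2 + i)
        ((eK ((g.2 * g'.2).left.2.2 ((g.2 * g'.2).right.toAdd.2 + i))).1 x) =
        WW.K (g.2.right.toAdd.2 + (g'.2.right.toAdd.2 + i))
          ((eK (g.2.left.2.2 (g.2.right.toAdd.2 + (g'.2.right.toAdd.2 + i)))).1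
            ((eK (g'.2.left.2.2 (g'.2.right.toAdd.2 + i))).1 x))
      rw [m3, m4]
      simp [add_assoc, zz_cancel]
    · change WW.X ((g.2 * g'.2).right.toAdd + i)
        ((eD ((g.2 * g'.2).left.1 ((g.2 * g'.2).right.toAdd + i))).1 x) =
        WW.X (g.2.right.toAdd + (g'.2.right.toAdd + i))
          ((eD (g.2.left.1 (g.2.right.toAdd + (g'.2.right.toAdd + i)))).1
            ((eD (g'.2.left.1 (g'.2.right.toAdd + i))).1 x))
      rw [m1, m4]
      simp [add_assoc]
  have Fl : ∀ g, Function.LeftInverse (F g⁻¹) (F g) := fun g w => by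
    have := congrFun (Fmul g⁻¹ g) w
    rw [inv_mul_cancel, Fone] at this
    exact this.symm
  have Fr : ∀ g, Function.RightInverse (F g⁻¹) (F g) := fun g w => by
    have := congrFun (Fmul g g⁻¹) w
    rw [mul_inv_cancel, Fone] at this
    exact this.symm
  have Fadj : ∀ g u v, (R.graph C9.graph).Adj (F g u) (F g v) ↔ (R.graph C9.graph).Adj u v := by
    intro g
    refine R.adj_of_comm C9.graph ⟨F g, F g⁻¹, Fl g, Fr g⟩ ?_ (C9.act g.2.right.toAdd) ?_
      (C9.act_adj _)
    · rintro (x | ⟨i, x⟩ | ⟨i, x⟩ | ⟨i, x⟩)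
      · exact congrArg WW.m ((eA _).2 x)
      · exact congrArg (WW.P _) ((eH _).2 x)
      · exact congrArg (WW.K _) ((eK _).2 x)
      · exact congrArg (WW.X _) ((eD _).2 x)
    · rintro (x | ⟨i, x⟩ | ⟨i, x⟩ | ⟨i, x⟩) <;> rfl
  let Φ : A × B2group D H K →* (R.graph C9.graph ≃g R.graph C9.graph) :=
    { toFun := fun g => ⟨⟨F g, F g⁻¹, Fl g, Fr g⟩, Fadj g _ _⟩
      map_one' := by
        apply RelIso.ext
        intro w
        exact congrFun Fone w
      map_mul' := by
        intro g g'
        apply RelIso.ext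
        intro w
        exact congrFun (Fmul g g') w }
  refine ⟨(MulEquiv.ofBijective Φ ⟨?_, ?_⟩).symm⟩
  · rw [injective_iff_map_eq_one]
    rintro ⟨a, g⟩ hg
    have hF : ∀ w, F (a, g) w = w := fun w => DFunLike.congr_fun hg w
    have eX := fun i x => WW.X.inj (hF (.X i x))
    have hq : g.right.toAdd = 0 := by
      have := (eX 0 rD).1
      simpa using this
    have hq' : g.right = 1 := hq
    have ha : a = 1 := by
      apply eA.injective
      apply Subtype.ext
      apply Equiv.ext
      intro x
      rw [map_one]
      exact WW.m.inj (hF (.m x))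
    have hd : g.left.1 = 1 := by
      funext i
      apply eD.injective
      apply Subtype.ext
      apply Equiv.ext
      intro x
      have := (eX i x).2
      simp only [hq, zero_add] at this
      rw [this]; simp
    have hh : g.left.2.1 = 1 := by
      funext i
      apply eH.injective
      apply Subtype.ext
      apply Equiv.ext
      intro x
      have := (WW.P.inj (hF (.P i x))).2
      simp only [hq, Prod.fst_zero, zero_add] at this
      rw [this]; simp
    have hk : g.left.2.2 = 1 := by
      funext i
      apply eK.injective
      apply Subtype.ext
      apply Equiv.ext
      intro x
      have := (WW.K.inj (hF (.K i x))).2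
      simp only [hq, Prod.snd_zero, zero_add] at this
      rw [this]; simp
    refine Prod.ext ha ?_
    apply SemidirectProduct.ext
    · exact Prod.ext hd (Prod.ext hh hk)
    · exact hq'
  · intro φ
    have hc : ∀ w, R.p (φ w) = φ (R.p w) := fun w => R.comm _ C9.two φ _ w rfl
    obtain ⟨f, hf⟩ := R.core_iso _ C9.two φ
    obtain ⟨q, hq⟩ := C9.core_aut f
    have hρ : ∀ w, R.ρ (φ w) = C9.act q (R.ρ w) := fun w => by rw [hf, hq]
    have iA : ∃ σ : PA pA, ∀ x, φ (.m x) = .m (σ.1 x) := by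
      refine R.exists_PA pA φ φ.injective hc _ _ (fun _ _ h => WW.m.inj h)
        (fun _ _ h => WW.m.inj h) (fun _ => rfl) (fun _ => rfl) ?_
      intro x
      have := hρ (.m x)
      rcases hw : φ (.m x) with y | ⟨i, y⟩ | ⟨i, y⟩ | ⟨i, y⟩ <;> rw [hw] at this <;> cases this
      exact ⟨y, rfl⟩
    have iP : ∀ i, ∃ σ : PA pH, ∀ x, φ (.P i x) = .P (q.1 + i) (σ.1 x) := by
      intro i
      refine R.exists_PA pH φ φ.injective hc _ _ (fun _ _ h => (WW.P.inj h).2)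
        (fun _ _ h => (WW.P.inj h).2) (fun _ => rfl) (fun _ => rfl) ?_
      intro x
      have := hρ (.P i x)
      rcases hw : φ (.P i x) with y | ⟨i, y⟩ | ⟨i, y⟩ | ⟨i, y⟩ <;> rw [hw] at this <;> cases this
      exact ⟨y, rfl⟩
    have iK : ∀ i, ∃ σ : PA pK, ∀ x, φ (.K i x) = .K (q.2 + i) (σ.1 x) := by
      intro i
      refine R.exists_PA pK φ φ.injective hc _ _ (fun _ _ h => (WW.K.inj h).2)
        (fun _ _ h => (WW.K.inj h).2) (fun _ => rfl) (fun _ => rfl) ?_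
      intro x
      have := hρ (.K i x)
      rcases hw : φ (.K i x) with y | ⟨i, y⟩ | ⟨i, y⟩ | ⟨i, y⟩ <;> rw [hw] at this <;> cases this
      exact ⟨y, rfl⟩
    have iX : ∀ i, ∃ σ : PA pD, ∀ x, φ (.X i x) = .X (q + i) (σ.1 x) := by
      intro i
      refine R.exists_PA pD φ φ.injective hc _ _ (fun _ _ h => (WW.X.inj h).2)
        (fun _ _ h => (WW.X.inj h).2) (fun _ => rfl) (fun _ => rfl) ?_
      intro x
      have := hρ (.X i x)
      rcases hw : φ (.X i x) with y | ⟨i, y⟩ | ⟨i, y⟩ | ⟨i, y⟩ <;> rw [hw] at this <;> cases this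
      exact ⟨y, rfl⟩
    obtain ⟨sA, hsA⟩ := iA
    choose sP hsP using iP
    choose sK hsK using iK
    choose sX hsX using iX
    refine ⟨(eA.symm sA, (⟨(fun i => eD.symm (sX (-q + i)), fun i => eH.symm (sP (-q.1 + i)),
      fun i => eK.symm (sK (-q.2 + i))), Multiplicative.ofAdd q⟩ : SemidirectProduct _ _ _)), ?_⟩
    apply RelIso.ext
    rintro (x | ⟨i, x⟩ | ⟨i, x⟩ | ⟨i, x⟩)
    · rw [hsA]
      change WW.m ((eA (eA.symm sA)).1 x) = _
      simp
    · rw [hsP]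
      change WW.P (q.1 + i) ((eH (eH.symm (sP (-q.1 + (q.1 + i))))).1 x) = _
      simp [zz_cancel]
    · rw [hsK]
      change WW.K (q.2 + i) ((eK (eK.symm (sK (-q.2 + (q.2 + i))))).1 x) = _
      simp [zz_cancel]
    · rw [hsX]
      change WW.X (q + i) ((eD (eD.symm (sX (-q + (q + i))))).1 x) = _
      simp

/-- For all finite trees `Ψ`, `T`, `Λ` and `Υ` there is a bicyclic graph
`Δ` with `Aut(Δ) ≅ Aut(Ψ) × ((D⁴ × H² × K²) ⋊ (Z₂ × Z₂))`, where `D = Aut(T)`,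
`H = Aut(Λ)`, `K = Aut(Υ)` and `Z₂ × Z₂` acts as described in `B2act`. -/
theorem B2_realizable_as_aut_bicyclic
    {U V X Y : Type} [Fintype U] [Fintype V] [Fintype X] [Fintype Y]
    (Ψ : SimpleGraph U) (hΨ : Ψ.IsTree) (T : SimpleGraph V) (hT : T.IsTree)
    (Λ : SimpleGraph X) (hΛ : Λ.IsTree) (Υ : SimpleGraph Y) (hΥ : Υ.IsTree) :
    ∃ (W : Type) (_ : Fintype W) (Δ : SimpleGraph W),
      Δ.IsBicyclic ∧
        Nonempty ((Δ ≃g Δ) ≃* (Ψ ≃g Ψ) × B2group (T ≃g T) (Λ ≃g Λ) (Υ ≃g Υ)) := by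
  obtain ⟨BA, _, pA, hA, rA, a1, a2, ⟨eA⟩⟩ := tree_rooted Ψ hΨ
  obtain ⟨BD, _, pD, hD, rD, d1, d2, ⟨eD⟩⟩ := tree_rooted T hT
  obtain ⟨BH, _, pH, hH, rH, h1, h2, ⟨eH⟩⟩ := tree_rooted Λ hΛ
  obtain ⟨BK, _, pK, hK, rK, k1, k2, ⟨eK⟩⟩ := tree_rooted Υ hΥ
  exact main_aux pA hA rA a1 a2 eA pD hD rD d1 d2 eD pH hH rH h1 h2 eH pK hK rK k1 k2 eK
end
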